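/- Let C be a regular category and X an object with global support. Then X is projection-coextensive if and only if the pushout of any binary product diagram of X along any product projection of X exists and is a binary product diagram; that is, for every binary product diagram (π₁ : X → A₁, π₂ : X → A₂) and every product projection p : X → Y, pushouts of π₁ and π₂ along p exist and the resulting pair of pushout legs (b₁ : Y → B₁, b₂ : Y → B₂) is a binary product diagram. -/

import Mathlib

open CategoryTheory CategoryTheory.Limits

universe v u

variable {C : Type u} [Category.{v} C]

/-- `(p, q)` is a binary product diagram, exhibiting `X` as the product of `A` and `B`. -/
def IsBinaryProduct {X A B : C} (p : X ⟶ A) (q : X ⟶ B) : Prop :=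
  Nonempty (IsLimit (BinaryFan.mk p q))

/-- `p : X ⟶ A` is a product projection. -/
def IsProductProjection {X A : C} (p : X ⟶ A) : Prop :=
  ∃ (B : C) (q : X ⟶ B), IsBinaryProduct p q

/-- A pushout square whose two legs belong to the class `M`. -/
def IsMPushout (M : MorphismProperty C) {Z A B P : C}
    (f : Z ⟶ A) (g : Z ⟶ B) (a : A ⟶ P) (b : B ⟶ P) : Prop :=
  IsPushout f g a b ∧ M a ∧ M b

/-- `X` is an `M`-coextensive object. -/
structure MCoextensive (M : MorphismProperty C) (X : C) : Prop where
  pushout_exists : ∀ ⦃Y A : C⦄ (m : X ⟶ Y) (p : X ⟶ A), M m → IsProductProjection p →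
    ∃ (P : C) (a : A ⟶ P) (b : Y ⟶ P), IsMPushout M p m a b
  isBinaryProduct_iff : ∀ ⦃A₁ A₂ Y B₁ B₂ : C⦄ (π₁ : X ⟶ A₁) (π₂ : X ⟶ A₂)
    (f : X ⟶ Y) (p₁ : A₁ ⟶ B₁) (p₂ : A₂ ⟶ B₂) (π₁' : Y ⟶ B₁) (π₂' : Y ⟶ B₂),
    IsBinaryProduct π₁ π₂ → M f → M p₁ → M p₂ →
    π₁ ≫ p₁ = f ≫ π₁' → π₂ ≫ p₂ = f ≫ π₂' →
    (IsBinaryProduct π₁' π₂' ↔ (IsMPushout M π₁ f p₁ π₁' ∧ IsMPushout M π₂ f p₂ π₂'))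

/-- The class of product projections. -/
def projections (C : Type u) [Category.{v} C] : MorphismProperty C :=
  fun _ _ f => IsProductProjection f

/-- `X` is projection-coextensive. -/
def ProjectionCoextensive (X : C) : Prop := MCoextensive (projections C) X

/-- `f` is a regular epimorphism (a coequalizer of some parallel pair). -/
def IsRegularEpimorphism {X Y : C} (f : X ⟶ Y) : Prop :=
  ∃ (W : C) (a b : W ⟶ X) (h : a ≫ f = b ≫ f), Nonempty (IsColimit (Cofork.ofπ f h))

/-- The class of regular epimorphisms. -/
def regularEpis (C : Type u) [Category.{v} C] : MorphismProperty C :=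
  fun _ _ f => IsRegularEpimorphism f

/-- `X` is regularly-coextensive. -/
def RegularlyCoextensive (X : C) : Prop := MCoextensive (regularEpis C) X

/-- A regular category: finitely complete, coequalizers of kernel pairs, and
regular epimorphisms are stable under pullback. -/
class IsRegularCategory (C : Type u) [Category.{v} C] [HasFiniteLimits C] : Prop where
  hasCoequalizer_kernelPair : ∀ {X Y : C} (f : X ⟶ Y),
    HasCoequalizer (pullback.fst f f) (pullback.snd f f)
  regularEpi_stable : ∀ {X Y Z : C} (f : X ⟶ Y) (g : Z ⟶ Y),
    IsRegularEpimorphism f → IsRegularEpimorphism (pullback.snd f g)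

/-- `X` has global support: the unique morphism to the terminal object is a regular epi. -/
def HasGlobalSupport [HasTerminal C] (X : C) : Prop :=
  IsRegularEpimorphism (terminal.from X)

/-!
Suppose `c₁ : P₁ ⟶ B₁` and `c₂ : P₂ ⟶ B₂` are such that an object `Y` is at once the product of
`P₁`, `P₂` and, via `c₁` and `c₂`, the product of `B₁`, `B₂`. On generalized elements, `c₁` is then
bijective at every stage at which `P₂` has an element. Given a morphism `X ⟶ P₂`, this is the case
at every stage `X ⨯ T`, and global support of `X` allows one to descend along `X ⨯ T ⟶ T`, so that
`c₁` is an isomorphism. Taking for `c₁` and `c₂` the comparison morphisms out of two pushouts whose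
legs form a product diagram, one sees that two commutative squares with the same spans whose legs
also form a product diagram are themselves pushouts.
-/

namespace IsBinaryProduct

variable {X A B : C} {p : X ⟶ A} {q : X ⟶ B}

theorem flip (h : IsBinaryProduct p q) : IsBinaryProduct q p :=
  h.map BinaryFan.isLimitFlip

theorem isProductProjection_left (h : IsBinaryProduct p q) : IsProductProjection p :=
  ⟨B, q, h⟩

theorem isProductProjection_right (h : IsBinaryProduct p q) : IsProductProjection q :=
  h.flip.isProductProjection_left

theorem exists_lift (h : IsBinaryProduct p q) {T : C} (s : T ⟶ A) (t : T ⟶ B) :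
    ∃ l : T ⟶ X, l ≫ p = s ∧ l ≫ q = t :=
  let l := BinaryFan.IsLimit.lift' h.some s t
  ⟨l.1, l.2⟩

theorem hom_ext (h : IsBinaryProduct p q) {T : C} {s t : T ⟶ X} (hp : s ≫ p = t ≫ p)
    (hq : s ≫ q = t ≫ q) : s = t :=
  BinaryFan.IsLimit.hom_ext h.some hp hq

theorem comp_isIso (h : IsBinaryProduct p q) {A' B' : C} (a : A ⟶ A') (b : B ⟶ B')
    [IsIso a] [IsIso b] : IsBinaryProduct (p ≫ a) (q ≫ b) :=
  h.map fun hl => BinaryFan.isLimitCompRightIso (BinaryFan.mk (p ≫ a) q) b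
    (BinaryFan.isLimitCompLeftIso (BinaryFan.mk p q) a hl)

theorem mono_left_of_comp [HasBinaryProducts C] {Z Y P₁ P₂ B₁ B₂ : C}
    [∀ T : C, Epi (prod.snd : Z ⨯ T ⟶ T)] {b₁ : Y ⟶ P₁} {b₂ : Y ⟶ P₂}
    {c₁ : P₁ ⟶ B₁} {c₂ : P₂ ⟶ B₂} (hb : IsBinaryProduct b₁ b₂)
    (hc : IsBinaryProduct (b₁ ≫ c₁) (b₂ ≫ c₂)) (z : Z ⟶ P₂) : Mono c₁ where
  right_cancellation {T} u v huv := by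
    obtain ⟨u', hu₁, hu₂⟩ := hb.exists_lift ((prod.snd : Z ⨯ T ⟶ T) ≫ u) (prod.fst ≫ z)
    obtain ⟨v', hv₁, hv₂⟩ := hb.exists_lift ((prod.snd : Z ⨯ T ⟶ T) ≫ v) (prod.fst ≫ z)
    have huv' : u' = v' := hc.hom_ext
      (by rw [reassoc_of% hu₁, reassoc_of% hv₁, huv])
      (by rw [reassoc_of% hu₂, reassoc_of% hv₂])
    rw [← cancel_epi (prod.snd : Z ⨯ T ⟶ T), ← hu₁, ← hv₁, huv']

theorem isIso_left_of_comp [HasBinaryProducts C] {Z Y P₁ P₂ B₁ B₂ : C}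
    [∀ T : C, ExtremalEpi (prod.snd : Z ⨯ T ⟶ T)] {b₁ : Y ⟶ P₁} {b₂ : Y ⟶ P₂}
    {c₁ : P₁ ⟶ B₁} {c₂ : P₂ ⟶ B₂} (hb : IsBinaryProduct b₁ b₂)
    (hc : IsBinaryProduct (b₁ ≫ c₁) (b₂ ≫ c₂)) (z : Z ⟶ P₂) : IsIso c₁ := by
  have : Mono c₁ := hb.mono_left_of_comp hc z
  obtain ⟨w, hw, -⟩ := hc.exists_lift (prod.snd : Z ⨯ B₁ ⟶ B₁) (prod.fst ≫ z ≫ c₂)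
  exact ExtremalEpi.isIso (prod.snd : Z ⨯ B₁ ⟶ B₁) (w ≫ b₁) c₁ (by rw [Category.assoc, hw])

end IsBinaryProduct

/-- The condition that the pushout of any binary product diagram of `X` along any product
projection of `X` exists and is a binary product diagram. -/
def HasBinaryProductPushouts (X : C) : Prop :=
  ∀ ⦃A₁ A₂ Y : C⦄ (π₁ : X ⟶ A₁) (π₂ : X ⟶ A₂) (p : X ⟶ Y),
    IsBinaryProduct π₁ π₂ → IsProductProjection p →
    ∃ (B₁ B₂ : C) (a₁ : A₁ ⟶ B₁) (b₁ : Y ⟶ B₁) (a₂ : A₂ ⟶ B₂) (b₂ : Y ⟶ B₂),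
      IsPushout π₁ p a₁ b₁ ∧ IsPushout π₂ p a₂ b₂ ∧ IsBinaryProduct b₁ b₂

theorem ProjectionCoextensive.hasBinaryProductPushouts {X : C} (hX : ProjectionCoextensive X) :
    HasBinaryProductPushouts X := by
  intro A₁ A₂ Y π₁ π₂ p hπ hp
  obtain ⟨B₁, a₁, b₁, h₁⟩ := hX.pushout_exists p π₁ hp hπ.isProductProjection_left
  obtain ⟨B₂, a₂, b₂, h₂⟩ := hX.pushout_exists p π₂ hp hπ.isProductProjection_right
  have hb : IsBinaryProduct b₁ b₂ :=
    (hX.isBinaryProduct_iff π₁ π₂ p a₁ a₂ b₁ b₂ hπ hp h₁.2.1 h₂.2.1 h₁.1.w h₂.1.w).2 ⟨h₁, h₂⟩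
  exact ⟨B₁, B₂, a₁, b₁, a₂, b₂, h₁.1, h₂.1, hb⟩

namespace HasBinaryProductPushouts

variable {X : C}

theorem isBinaryProduct (H : HasBinaryProductPushouts X) {A₁ A₂ Y B₁ B₂ : C} {π₁ : X ⟶ A₁}
    {π₂ : X ⟶ A₂} {f : X ⟶ Y} {a₁ : A₁ ⟶ B₁} {a₂ : A₂ ⟶ B₂} {b₁ : Y ⟶ B₁} {b₂ : Y ⟶ B₂}
    (hπ : IsBinaryProduct π₁ π₂) (hf : IsProductProjection f)
    (h₁ : IsPushout π₁ f a₁ b₁) (h₂ : IsPushout π₂ f a₂ b₂) : IsBinaryProduct b₁ b₂ := by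
  obtain ⟨P₁, P₂, _, d₁, _, d₂, k₁, k₂, hd⟩ := H π₁ π₂ f hπ hf
  simpa only [IsPushout.inr_isoIsPushout_hom] using
    hd.comp_isIso (k₁.isoIsPushout _ _ h₁).hom (k₂.isoIsPushout _ _ h₂).hom

theorem isProductProjection_inr (H : HasBinaryProductPushouts X) {A Y P : C} {p : X ⟶ A}
    {f : X ⟶ Y} {a : A ⟶ P} {b : Y ⟶ P} (hp : IsProductProjection p)
    (hf : IsProductProjection f) (h : IsPushout p f a b) : IsProductProjection b := by
  obtain ⟨_, q, hpq⟩ := hp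
  obtain ⟨_, _, _, _, _, _, _, hq, _⟩ := H p q f hpq hf
  exact (H.isBinaryProduct hpq hf h hq).isProductProjection_left

theorem exists_isMPushout (H : HasBinaryProductPushouts X) {A Y : C} {p : X ⟶ A} {f : X ⟶ Y}
    (hp : IsProductProjection p) (hf : IsProductProjection f) :
    ∃ (P : C) (a : A ⟶ P) (b : Y ⟶ P), IsMPushout (projections C) p f a b := by
  have ⟨_, q, hpq⟩ := hp
  obtain ⟨P, _, a, b, _, _, h, _⟩ := H p q f hpq hf
  exact ⟨P, a, b, h, H.isProductProjection_inr hf hp h.flip, H.isProductProjection_inr hp hf h⟩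

theorem isPushout_left [HasBinaryProducts C] [∀ T : C, ExtremalEpi (prod.snd : X ⨯ T ⟶ T)]
    (H : HasBinaryProductPushouts X) {A₁ A₂ Y B₁ B₂ : C} {π₁ : X ⟶ A₁}
    {π₂ : X ⟶ A₂} {f : X ⟶ Y} {p₁ : A₁ ⟶ B₁} {p₂ : A₂ ⟶ B₂} {q₁ : Y ⟶ B₁} {q₂ : Y ⟶ B₂}
    (hπ : IsBinaryProduct π₁ π₂) (hf : IsProductProjection f) (w₁ : π₁ ≫ p₁ = f ≫ q₁)
    (w₂ : π₂ ≫ p₂ = f ≫ q₂) (hq : IsBinaryProduct q₁ q₂) : IsPushout π₁ f p₁ q₁ := by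
  obtain ⟨_, _, a₁, b₁, a₂, b₂, h₁, h₂, hb⟩ := H π₁ π₂ f hπ hf
  have hc : IsBinaryProduct (b₁ ≫ h₁.desc p₁ q₁ w₁) (b₂ ≫ h₂.desc p₂ q₂ w₂) := by
    simpa only [IsPushout.inr_desc] using hq
  have : IsIso (h₁.desc p₁ q₁ w₁) := hb.isIso_left_of_comp hc (f ≫ b₂)
  exact h₁.of_iso (Iso.refl _) (Iso.refl _) (Iso.refl _) (asIso (h₁.desc p₁ q₁ w₁))
    (by simp) (by simp) (by simp) (by simp)

end HasBinaryProductPushouts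

theorem projectionCoextensive_iff_pushout_prod_general [HasBinaryProducts C] (X : C)
    [∀ T : C, ExtremalEpi (prod.snd : X ⨯ T ⟶ T)] :
    ProjectionCoextensive X ↔ HasBinaryProductPushouts X := by
  refine ⟨ProjectionCoextensive.hasBinaryProductPushouts, fun H =>
    ⟨fun _ _ _ _ hf hp => H.exists_isMPushout hp hf, ?_⟩⟩
  intro A₁ A₂ Y B₁ B₂ π₁ π₂ f p₁ p₂ q₁ q₂ hπ hf hp₁ hp₂ w₁ w₂
  constructor
  · intro hq
    exact ⟨⟨H.isPushout_left hπ hf w₁ w₂ hq, hp₁, hq.isProductProjection_left⟩,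
      ⟨H.isPushout_left hπ.flip hf w₂ w₁ hq.flip, hp₂, hq.isProductProjection_right⟩⟩
  · rintro ⟨⟨h₁, -⟩, ⟨h₂, -⟩⟩
    exact H.isBinaryProduct hπ hf h₁ h₂

theorem IsRegularEpimorphism.isRegularEpi {X Y : C} {f : X ⟶ Y} (hf : IsRegularEpimorphism f) :
    IsRegularEpi f := by
  obtain ⟨W, a, b, w, ⟨hc⟩⟩ := hf
  exact ⟨⟨W, a, b, w, hc⟩⟩

theorem HasGlobalSupport.strongEpi_prod_snd [HasFiniteLimits C] [IsRegularCategory C] {X : C}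
    (hX : HasGlobalSupport X) (T : C) : StrongEpi (prod.snd : X ⨯ T ⟶ T) := by
  have hT : IsRegularEpi (pullback.snd (terminal.from X) (terminal.from T)) :=
    (IsRegularCategory.regularEpi_stable _ _ hX).isRegularEpi
  let l : pullback (terminal.from X) (terminal.from T) ⟶ X ⨯ T :=
    prod.lift (pullback.fst _ _) (pullback.snd _ _)
  have hl : l ≫ prod.snd = pullback.snd _ _ := prod.lift_snd _ _
  have : StrongEpi (l ≫ prod.snd) := by
    rw [hl]
    infer_instance
  exact strongEpi_of_strongEpi l prod.snd

/-- An object with global support in a regular category is projection-coextensive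
if and only if the pushout of any of its binary product diagrams along any of its
product projections exists and is a binary product diagram. -/
theorem projectionCoextensive_iff_pushout_prod
    {C : Type u} [Category.{v} C] [HasFiniteLimits C] [IsRegularCategory C]
    (X : C) (hgs : HasGlobalSupport X) :
    ProjectionCoextensive X ↔
      ∀ ⦃A₁ A₂ Y : C⦄ (π₁ : X ⟶ A₁) (π₂ : X ⟶ A₂) (p : X ⟶ Y),
        IsBinaryProduct π₁ π₂ → IsProductProjection p →
        ∃ (B₁ B₂ : C) (a₁ : A₁ ⟶ B₁) (b₁ : Y ⟶ B₁) (a₂ : A₂ ⟶ B₂) (b₂ : Y ⟶ B₂),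
          IsPushout π₁ p a₁ b₁ ∧ IsPushout π₂ p a₂ b₂ ∧ IsBinaryProduct b₁ b₂ := by
  have := hgs.strongEpi_prod_snd
  exact projectionCoextensive_iff_pushout_prod_general X
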